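/- Let S ⊆ ℝⁿ (n ≥ 2) be a d-set with n−1 < d < n, let 1 < p < ∞ and (n−d)/p < s < 1. Then there is a constant c > 0 (depending on n, d, p, s and S) such that for every f ∈ W^{s,p}(ℝⁿ) whose trace satisfies Tr_S f = 0 ℋᵈ-almost everywhere on S, one has (∫_{ℝⁿ} |f(x)|^p / dist(x,S)^{sp} dx)^{1/p} ≤ c ‖f‖_{W^{s,p}(ℝⁿ)}. -/

import Mathlib

open MeasureTheory Metric Set Filter
open scoped ENNReal NNReal Topology

noncomputable section

/-- ℝⁿ, with the sup-norm (given by the product metric on `Fin n → ℝ`). -/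
abbrev Rn (n : ℕ) := Fin n → ℝ

/-- The Euclidean distance on `Rn n`. -/
def euclDist {n : ℕ} (x y : Rn n) : ℝ := Real.sqrt (∑ i, (x i - y i) ^ 2)

/-- `S` is an (Ahlfors) `d`-set with regularity constant `C`:
`C⁻¹ rᵈ ≤ ℋᵈ(Q(w,r) ∩ S) ≤ C rᵈ` for all `w ∈ S`, `0 < r ≤ 1`. -/
def IsDSet {n : ℕ} (S : Set (Rn n)) (d C : ℝ) : Prop :=
  IsClosed S ∧ 1 < C ∧ ∀ w ∈ S, ∀ r : ℝ, 0 < r → r ≤ 1 →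
    ENNReal.ofReal (C⁻¹ * r ^ d) ≤ μH[d] (closedBall w r ∩ S) ∧
      μH[d] (closedBall w r ∩ S) ≤ ENNReal.ofReal (C * r ^ d)

/-- `Tr_S f = 0` pointwise ℋᵈ-almost everywhere on `S`: for ℋᵈ-a.e. `x ∈ S`, the
limit of averages `⨍_{Q(x,r)} f` as `r → 0⁺` exists and equals `0`. -/
def TraceZero {n : ℕ} (S : Set (Rn n)) (d : ℝ) (f : Rn n → ℝ) : Prop :=
  ∀ᵐ x ∂(μH[d]).restrict S,
    Tendsto (fun r : ℝ => ⨍ y in closedBall x r, f y) (𝓝[>] 0) (𝓝 0)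

/-- The `L^p` norm (as a value in `[0,∞]`). -/
def lpNormR {n : ℕ} (p : ℝ) (f : Rn n → ℝ) : ℝ≥0∞ :=
  (∫⁻ x, ENNReal.ofReal |f x| ^ p) ^ (1 / p)

/-- The Gagliardo seminorm of `W^{s,p}(ℝⁿ)` (Euclidean distance in the kernel). -/
def gagliardo {n : ℕ} (s p : ℝ) (f : Rn n → ℝ) : ℝ≥0∞ :=
  (∫⁻ x, ∫⁻ y, ENNReal.ofReal (|f x - f y| ^ p / euclDist x y ^ (s * p + n))) ^ (1 / p)

/-- The norm of the fractional Sobolev space `W^{s,p}(ℝⁿ)`. -/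
def sobolevNorm {n : ℕ} (s p : ℝ) (f : Rn n → ℝ) : ℝ≥0∞ :=
  lpNormR p f + gagliardo s p f

/-- The left hand side of the Hardy inequality: `(∫ |f|^p / dist(x,S)^{sp} dx)^{1/p}`,
with the distance to `S` measured in the sup-norm. -/
def hardyLHS {n : ℕ} (S : Set (Rn n)) (s p : ℝ) (f : Rn n → ℝ) : ℝ≥0∞ :=
  (∫⁻ x, ENNReal.ofReal (|f x| ^ p / infDist x S ^ (s * p))) ^ (1 / p)

/-!
If the averages of `f` over the balls `B(w, 2^{-k})` tend to `0` as `k → ∞`, telescoping them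
bounds `|f(x)|^p`, for `x` at distance about `2^{-i}` from `w`, by the oscillation energies
`∬_{|y - z| ≲ 2^{-k}} |f(y) - f(z)|^p` of `f` near `w` at the scales `k ≥ i`. Almost every `w ∈ S`
has this property, so the bound may be averaged over `w ∈ S ∩ B(x, 2^{-i})`, a set of `ℋᵈ`-measure
about `2^{-di}`. Integrating over the `2^{-i}`-neighbourhood of `S` costs a factor
`2^{(n-d)(k-i)}` at the scale `k`, while the Hardy weight `2^{spi}` falls short of the Gagliardo
weight `2^{spk}` by `2^{sp(k-i)}`; since `n - d < sp` the double sum over `i ≤ k` converges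
geometrically, and the energies with the weights `2^{(sp+n)k}` sum up to the Gagliardo seminorm.
Nothing but the Ahlfors regularity of the two measures enters, so the inequality holds in metric
spaces.
-/

section DyadicSums

lemma two_rpow_add (a b : ℝ) : (2 : ℝ≥0∞) ^ (a + b) = 2 ^ a * 2 ^ b :=
  ENNReal.rpow_add a b two_ne_zero ENNReal.ofNat_ne_top

lemma two_rpow_ne_top (a : ℝ) : (2 : ℝ≥0∞) ^ a ≠ ∞ :=
  ENNReal.rpow_ne_top_of_ne_zero two_ne_zero ENNReal.ofNat_ne_top

/-- The value `∑ⱼ 2^{-ηj}` of the geometric series of ratio `2^{-η}`; finite exactly when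
`0 < η`. It collects the constants of all sums over dyadic scales. -/
def geomSum (η : ℝ) : ℝ≥0∞ := ∑' j : ℕ, 2 ^ (-(η * j))

lemma geomSum_ne_top {η : ℝ} (hη : 0 < η) : geomSum η ≠ ∞ := by
  have hratio : (2 : ℝ≥0∞) ^ (-η) < 1 :=
    ENNReal.rpow_lt_one_of_one_lt_of_neg ENNReal.one_lt_two (neg_neg_of_pos hη)
  simp only [geomSum, ← neg_mul, ENNReal.rpow_mul, ENNReal.rpow_natCast, ENNReal.tsum_geometric]
  exact ENNReal.inv_ne_top.2 (tsub_pos_of_lt hratio).ne'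

lemma sum_range_two_rpow_le (a : ℝ) (N : ℕ) :
    ∑ k ∈ Finset.range (N + 1), (2 : ℝ≥0∞) ^ (a * k) ≤ geomSum a * 2 ^ (a * N) := by
  rw [← Finset.sum_range_reflect, geomSum, ← ENNReal.tsum_mul_right]
  refine le_trans (le_of_eq (Finset.sum_congr rfl fun j hj => ?_))
    (ENNReal.sum_le_tsum (Finset.range (N + 1)))
  have hjN : j ≤ N := Finset.mem_range_succ_iff.1 hj
  rw [← two_rpow_add, add_tsub_cancel_right, Nat.cast_sub hjN]
  ring_nf

lemma tsum_rpow_le_geomSum_mul {p : ℝ} (hp : 0 < p) (η : ℝ) (a : ℕ → ℝ≥0∞) :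
    (∑' j, a j) ^ p ≤ geomSum (η / p) ^ p * ∑' j : ℕ, 2 ^ (η * j) * a j ^ p := by
  set M := ∑' j : ℕ, 2 ^ (η * j) * a j ^ p
  have hterm (j : ℕ) : a j ≤ 2 ^ (-(η / p * j)) * M ^ p⁻¹ := by
    calc a j = (2 ^ (-(η * j)) * (2 ^ (η * j) * a j ^ p)) ^ p⁻¹ := by
          rw [← mul_assoc, ← two_rpow_add, neg_add_cancel, ENNReal.rpow_zero, one_mul,
            ENNReal.rpow_rpow_inv hp.ne']
      _ ≤ (2 ^ (-(η * j)) * M) ^ p⁻¹ := by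
          gcongr
          exact ENNReal.le_tsum (f := fun j : ℕ => 2 ^ (η * j) * a j ^ p) j
      _ = 2 ^ (-(η / p * j)) * M ^ p⁻¹ := by
          rw [ENNReal.mul_rpow_of_nonneg _ _ (inv_nonneg.2 hp.le), ← ENNReal.rpow_mul]
          ring_nf
  calc (∑' j, a j) ^ p ≤ (geomSum (η / p) * M ^ p⁻¹) ^ p := by
        rw [geomSum, ← ENNReal.tsum_mul_right]
        gcongr with j
        exact hterm j
    _ = geomSum (η / p) ^ p * M := by
        rw [ENNReal.mul_rpow_of_nonneg _ _ hp.le, ENNReal.rpow_inv_rpow hp.ne']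

lemma tsum_two_rpow_mul_tsum_le (a η : ℝ) (H : ℕ → ℝ≥0∞) :
    ∑' i : ℕ, 2 ^ (a * i) * ∑' j : ℕ, 2 ^ ((a - η) * j) * H (i + 1 + j) ≤
      2 ^ (-a) * geomSum η * ∑' k : ℕ, 2 ^ (a * k) * H k := by
  set T : ℕ → ℝ≥0∞ := fun k => 2 ^ (a * k) * H k
  have hterm (i j : ℕ) : 2 ^ (a * i) * (2 ^ ((a - η) * j) * H (i + 1 + j)) =
      2 ^ (-a) * 2 ^ (-(η * j)) * T (i + (1 + j)) := by
    simp only [T, ← add_assoc, ← mul_assoc, ← two_rpow_add]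
    push_cast
    ring_nf
  calc ∑' i : ℕ, 2 ^ (a * i) * ∑' j : ℕ, 2 ^ ((a - η) * j) * H (i + 1 + j)
      = ∑' (j : ℕ) (i : ℕ), 2 ^ (-a) * 2 ^ (-(η * j)) * T (i + (1 + j)) := by
        simp_rw [← ENNReal.tsum_mul_left, hterm]
        exact ENNReal.tsum_comm
    _ ≤ ∑' j : ℕ, 2 ^ (-a) * 2 ^ (-(η * j)) * ∑' k, T k := by
        gcongr with j
        rw [ENNReal.tsum_mul_left]
        exact mul_le_mul_right
          (ENNReal.tsum_comp_le_tsum_of_injective (add_left_injective (1 + j)) T) _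
    _ = 2 ^ (-a) * geomSum η * ∑' k, T k := by
        rw [geomSum, ENNReal.tsum_mul_right, ENNReal.tsum_mul_left]

/-- The dyadic radius `2^{-(k+1)}`. The shift makes volumes of sup-norm balls exact powers
`2^{-nk}`, and keeps the doubled balls within the range `r ≤ 1` of `IsDSet`. -/
def dyadicRadius (k : ℕ) : ℝ := 2⁻¹ ^ (k + 1)

lemma dyadicRadius_pos (k : ℕ) : 0 < dyadicRadius k := by
  unfold dyadicRadius
  positivity

lemma two_mul_dyadicRadius_rpow (k : ℕ) (a : ℝ) :
    (2 * dyadicRadius k) ^ a = 2 ^ (-(a * k)) := by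
  have hpow : 2 * dyadicRadius k = 2 ^ (-k : ℝ) := by
    rw [dyadicRadius, pow_succ, inv_pow, Real.rpow_neg zero_le_two, Real.rpow_natCast]
    ring
  rw [hpow, ← Real.rpow_mul zero_le_two]
  ring_nf

lemma two_mul_dyadicRadius_le_one (k : ℕ) : 2 * dyadicRadius k ≤ 1 := by
  rw [← Real.rpow_one (2 * dyadicRadius k), two_mul_dyadicRadius_rpow, one_mul]
  exact Real.rpow_le_one_of_one_le_of_nonpos one_le_two (neg_nonpos.2 k.cast_nonneg)

lemma two_mul_dyadicRadius_succ (k : ℕ) : 2 * dyadicRadius (k + 1) = dyadicRadius k := by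
  rw [dyadicRadius, dyadicRadius, pow_succ _ (k + 1)]
  ring

lemma dyadicRadius_rpow (k : ℕ) (a : ℝ) : dyadicRadius k ^ a = 2 ^ (-(a * (k + 1))) := by
  rw [← two_mul_dyadicRadius_succ, two_mul_dyadicRadius_rpow, Nat.cast_succ]

lemma ofReal_two_rpow (a : ℝ) : ENNReal.ofReal (2 ^ a) = 2 ^ a := by
  rw [← ENNReal.ofReal_rpow_of_pos two_pos, ENNReal.ofReal_ofNat]

lemma ofReal_dyadicRadius (k : ℕ) : ENNReal.ofReal (dyadicRadius k) = 2 ^ (-(k + 1 : ℝ)) := by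
  rw [← Real.rpow_one (dyadicRadius k), dyadicRadius_rpow, ofReal_two_rpow, one_mul]

lemma tendsto_dyadicRadius : Tendsto dyadicRadius atTop (𝓝[>] 0) :=
  tendsto_nhdsWithin_iff.2 ⟨(tendsto_add_atTop_iff_nat 1).2
    (tendsto_pow_atTop_nhds_zero_of_lt_one (by norm_num) (by norm_num)),
    .of_forall dyadicRadius_pos⟩

lemma tsum_two_rpow_of_le_dyadicRadius_le {a : ℝ} (ha : 0 ≤ a) (δ : ℝ≥0∞) :
    ∑' k : ℕ, (if δ ≤ ENNReal.ofReal (4 * dyadicRadius k) then (2 : ℝ≥0∞) ^ (a * k) else 0) ≤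
      geomSum a * 2 ^ a * (δ ^ a)⁻¹ := by
  refine ENNReal.tsum_le_of_sum_range_le fun N => ?_
  induction N with
  | zero => simp
  | succ N ih =>
    by_cases hδ : δ ≤ ENNReal.ofReal (4 * dyadicRadius N)
    · have hδ' : δ ^ a ≤ 2 ^ (a - a * N) := by
        calc δ ^ a ≤ (2 ^ (1 - N : ℝ)) ^ a := by
              gcongr
              refine hδ.trans_eq ?_
              rw [ENNReal.ofReal_mul (by norm_num), ofReal_dyadicRadius,
                show (1 - N : ℝ) = 2 + -(N + 1) by ring, two_rpow_add]
              norm_num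
          _ = 2 ^ (a - a * N) := by rw [← ENNReal.rpow_mul]; ring_nf
      calc ∑ k ∈ Finset.range (N + 1),
            (if δ ≤ ENNReal.ofReal (4 * dyadicRadius k) then (2 : ℝ≥0∞) ^ (a * k) else 0)
          ≤ ∑ k ∈ Finset.range (N + 1), (2 : ℝ≥0∞) ^ (a * k) := by
            gcongr
            split_ifs <;> simp
        _ ≤ geomSum a * 2 ^ (a * N) := sum_range_two_rpow_le a N
        _ = geomSum a * 2 ^ a * (2 ^ (a - a * N))⁻¹ := by
            rw [mul_assoc, ← ENNReal.rpow_neg, ← two_rpow_add]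
            ring_nf
        _ ≤ geomSum a * 2 ^ a * (δ ^ a)⁻¹ := by gcongr
    · rwa [Finset.sum_range_succ, if_neg hδ, add_zero]

lemma inv_rpow_le_of_dyadicRadius_le {a : ℝ} (ha : 0 ≤ a) {δ : ℝ≥0∞} {k : ℕ}
    (hk : ENNReal.ofReal (dyadicRadius k) ≤ δ) : (δ ^ a)⁻¹ ≤ 2 ^ (a * (k + 1)) := by
  rw [show a * (k + 1) = -(-(k + 1) * a) by ring, ENNReal.rpow_neg, ENNReal.rpow_mul,
    ← ofReal_dyadicRadius]
  gcongr

lemma inv_rpow_le_tsum_two_rpow_of_le_dyadicRadius {a : ℝ} (ha : 0 ≤ a) (δ : ℝ≥0∞) :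
    (δ ^ a)⁻¹ ≤ 2 ^ (a * 3) * (1 + ∑' i : ℕ,
      if δ ≤ ENNReal.ofReal (dyadicRadius (i + 1)) then (2 : ℝ≥0∞) ^ (a * i) else 0) := by
  set t : ℕ → ℝ≥0∞ := fun i =>
    if δ ≤ ENNReal.ofReal (dyadicRadius (i + 1)) then 2 ^ (a * i) else 0
  by_cases! hδ : ∃ i, ENNReal.ofReal (dyadicRadius (i + 1)) < δ
  · have hlt := Nat.find_spec hδ
    rcases hi : Nat.find hδ with _ | i
    · rw [hi] at hlt
      calc (δ ^ a)⁻¹ ≤ 2 ^ (a * ((0 + 1 : ℕ) + 1)) := inv_rpow_le_of_dyadicRadius_le ha hlt.le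
        _ ≤ 2 ^ (a * 3) := ENNReal.rpow_le_rpow_of_exponent_le one_le_two
            (mul_le_mul_of_nonneg_left (by norm_num) ha)
        _ ≤ 2 ^ (a * 3) * (1 + ∑' i, t i) := le_mul_of_one_le_right' le_self_add
    · have hle : δ ≤ ENNReal.ofReal (dyadicRadius (i + 1)) := not_lt.1 (Nat.find_min hδ (by omega))
      rw [hi] at hlt
      calc (δ ^ a)⁻¹ ≤ 2 ^ (a * ((i + 1 + 1 : ℕ) + 1)) := inv_rpow_le_of_dyadicRadius_le ha hlt.le
        _ = 2 ^ (a * 3) * t i := by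
          rw [show t i = 2 ^ (a * i) from if_pos hle, ← two_rpow_add]
          push_cast
          ring_nf
        _ ≤ 2 ^ (a * 3) * (1 + ∑' i, t i) := by
          gcongr
          exact (ENNReal.le_tsum i).trans le_add_self
  · have hone (i : ℕ) : 1 ≤ t i := by
      rw [show t i = 2 ^ (a * i) from if_pos (hδ i), ← ENNReal.rpow_zero (x := 2)]
      exact ENNReal.rpow_le_rpow_of_exponent_le one_le_two (by positivity)
    have htop : ∑' i, t i = ∞ := top_unique <|
      (ENNReal.tsum_const_eq_top_of_ne_zero one_ne_zero).ge.trans (ENNReal.tsum_le_tsum hone)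
    rw [htop, add_top, ENNReal.mul_top (by simp)]
    exact le_top

end DyadicSums

section Averages

variable {α E : Type*} [MeasurableSpace α] [NormedAddCommGroup E] [NormedSpace ℝ E]
  {μ : Measure α} [IsFiniteMeasure μ] {f : α → E} {p : ℝ}

lemma enorm_average_rpow_le (hf : AEStronglyMeasurable f μ) (hp : 1 ≤ p) :
    ‖⨍ x, f x ∂μ‖ₑ ^ p ≤ ⨍⁻ x, ‖f x‖ₑ ^ p ∂μ := by
  have hp0 : 0 < p := by linarith
  rcases eq_zero_or_neZero μ with rfl | hμ
  · simp [hp0]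
  rw [average_eq', laverage_eq', lintegral_rpow_enorm_eq_rpow_eLpNorm' hp0]
  gcongr
  calc ‖∫ x, f x ∂(μ univ)⁻¹ • μ‖ₑ ≤ eLpNorm' f 1 ((μ univ)⁻¹ • μ) := by
        simpa only [eLpNorm'_eq_lintegral_enorm, ENNReal.rpow_one, one_div_one]
          using enorm_integral_le_lintegral_enorm f
    _ ≤ eLpNorm' f p ((μ univ)⁻¹ • μ) :=
        eLpNorm'_le_eLpNorm'_of_exponent_le one_pos hp _ (hf.smul_measure _)

variable [CompleteSpace E] [NeZero μ]

lemma enorm_sub_average_rpow_le (hf : Integrable f μ) (hp : 1 ≤ p) (c : E) :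
    ‖c - ⨍ x, f x ∂μ‖ₑ ^ p ≤ ⨍⁻ x, ‖c - f x‖ₑ ^ p ∂μ := by
  have hsub : c - ⨍ x, f x ∂μ = ⨍ x, (c - f x) ∂μ := by
    rw [average_eq μ (fun x => c - f x), integral_sub (integrable_const c) hf, smul_sub,
      ← average_eq, ← average_eq, average_const]
  rw [hsub]
  exact enorm_average_rpow_le (aestronglyMeasurable_const.sub hf.1) hp

lemma le_add_laverage_of_ae_le_add {c T : ℝ≥0∞} {R : α → ℝ≥0∞} (h : ∀ᵐ x ∂μ, c ≤ T + R x) :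
    c ≤ T + ⨍⁻ x, R x ∂μ := by
  calc c = ⨍⁻ _x, c ∂μ := (laverage_const μ c).symm
    _ ≤ ⨍⁻ x, (T + R x) ∂μ := laverage_mono_ae h
    _ = T + ⨍⁻ x, R x ∂μ := by
        rw [laverage, lintegral_add_left measurable_const, ← laverage, ← laverage, laverage_const]

end Averages

section BallIntegrals

variable {X : Type*} [PseudoMetricSpace X] [MeasurableSpace X] [BorelSpace X]

lemma setLIntegral_closedBall_eq_lintegral_indicator (μ : Measure X) (r : ℝ)
    (g : X → X → ℝ≥0∞) (x : X) :
    ∫⁻ y in closedBall x r, g x y ∂μ =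
      ∫⁻ y, {q : X × X | dist q.2 q.1 ≤ r}.indicator (Function.uncurry g) (x, y) ∂μ := by
  rw [← lintegral_indicator measurableSet_closedBall]
  rfl

variable [SecondCountableTopology X]

lemma measurableSet_dist_le (r : ℝ) : MeasurableSet {q : X × X | dist q.2 q.1 ≤ r} :=
  (isClosed_le (by fun_prop) (by fun_prop)).measurableSet

lemma measurable_setLIntegral_closedBall (μ : Measure X) [SFinite μ] (r : ℝ)
    {g : X → X → ℝ≥0∞} (hg : Measurable (Function.uncurry g)) :
    Measurable fun x => ∫⁻ y in closedBall x r, g x y ∂μ := by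
  simp_rw [setLIntegral_closedBall_eq_lintegral_indicator]
  exact (hg.indicator (measurableSet_dist_le r)).lintegral_prod_right'

lemma lintegral_setLIntegral_closedBall_swap (μ ν : Measure X) [SFinite μ] [SFinite ν] (r : ℝ)
    {g : X → ℝ≥0∞} (hg : Measurable g) :
    ∫⁻ x, ∫⁻ y in closedBall x r, g y ∂ν ∂μ = ∫⁻ y, g y * μ (closedBall y r) ∂ν := by
  simp_rw [setLIntegral_closedBall_eq_lintegral_indicator ν r fun _ y => g y]
  rw [lintegral_lintegral_swap]
  swap
  · exact Measurable.aemeasurable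
      (Measurable.indicator (hg.comp measurable_snd) (measurableSet_dist_le r))
  refine lintegral_congr fun y => ?_
  rw [← setLIntegral_const, ← lintegral_indicator measurableSet_closedBall]
  refine lintegral_congr fun x => ?_
  simp only [indicator, mem_ofPred_eq, mem_closedBall, dist_comm x y, Function.uncurry]

lemma lintegral_setLIntegral_closedBall_le (μ ν : Measure X) [SFinite μ] [SFinite ν] {r : ℝ}
    {g : X → ℝ≥0∞} (hg : Measurable g) {c : ℝ≥0∞} (hc : ∀ y, μ (closedBall y r) ≤ c) :
    ∫⁻ x, ∫⁻ y in closedBall x r, g y ∂ν ∂μ ≤ c * ∫⁻ y, g y ∂ν := by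
  rw [lintegral_setLIntegral_closedBall_swap μ ν r hg, ← lintegral_const_mul c hg]
  exact lintegral_mono fun y => (mul_comm _ _).trans_le (mul_le_mul_left (hc y) _)

end BallIntegrals

section Regularity

variable {X : Type*} [PseudoMetricSpace X] [MeasurableSpace X] {μ : Measure X} {S : Set X} {d : ℝ}
  {C : ℝ≥0} {x : X}

/-- Lower Ahlfors `d`-regularity of `μ` at the points of `S`. Only dyadic radii are tested, so
that no range of radii has to be specified. -/
def IsLowerRegularOn (μ : Measure X) (S : Set X) (d : ℝ) (C : ℝ≥0) : Prop :=
  ∀ x ∈ S, ∀ k : ℕ, 2 ^ (-(d * k)) ≤ C * μ (closedBall x (dyadicRadius k))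

/-- Upper Ahlfors `d`-regularity of `μ`, tested on dyadic radii but at every point of the space. -/
def IsUpperRegular (μ : Measure X) (d : ℝ) (C : ℝ≥0) : Prop :=
  ∀ (x : X) (k : ℕ), μ (closedBall x (dyadicRadius k)) ≤ C * 2 ^ (-(d * k))

lemma IsLowerRegularOn.inv_measure_closedBall_le (h : IsLowerRegularOn μ S d C) (hx : x ∈ S)
    (k : ℕ) : (μ (closedBall x (dyadicRadius k)))⁻¹ ≤ C * 2 ^ (d * k) := by
  set m := μ (closedBall x (dyadicRadius k))
  calc m⁻¹ = m⁻¹ * 2 ^ (-(d * k)) * 2 ^ (d * k) := by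
        rw [mul_assoc, ← two_rpow_add, neg_add_cancel, ENNReal.rpow_zero, mul_one]
    _ ≤ m⁻¹ * (C * m) * 2 ^ (d * k) := by gcongr; exact h x hx k
    _ = C * (m⁻¹ * m) * 2 ^ (d * k) := by ring
    _ ≤ C * 2 ^ (d * k) := by
        gcongr
        exact mul_le_of_le_one_right' (ENNReal.inv_mul_le_one m)

lemma IsLowerRegularOn.neZero_restrict_closedBall (h : IsLowerRegularOn μ S d C) (hx : x ∈ S)
    (k : ℕ) : NeZero (μ.restrict (closedBall x (dyadicRadius k))) :=
  ⟨Measure.restrict_eq_zero.not.2 <| ENNReal.inv_ne_top.1 <| ne_top_of_le_ne_top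
    (ENNReal.mul_ne_top ENNReal.coe_ne_top (two_rpow_ne_top _))
    (h.inv_measure_closedBall_le hx k)⟩

lemma IsUpperRegular.measure_closedBall_lt_top (h : IsUpperRegular μ d C) (x : X) (k : ℕ) :
    μ (closedBall x (dyadicRadius k)) < ∞ :=
  (h x k).trans_lt (ENNReal.mul_lt_top ENNReal.coe_lt_top (two_rpow_ne_top _).lt_top)

lemma IsUpperRegular.isFiniteMeasure_restrict_closedBall (h : IsUpperRegular μ d C) (x : X)
    (k : ℕ) : IsFiniteMeasure (μ.restrict (closedBall x (dyadicRadius k))) :=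
  isFiniteMeasure_restrict.2 (h.measure_closedBall_lt_top x k).ne

lemma IsUpperRegular.isLocallyFiniteMeasure (h : IsUpperRegular μ d C) :
    IsLocallyFiniteMeasure μ :=
  ⟨fun x => ⟨closedBall x (dyadicRadius 0), closedBall_mem_nhds x (dyadicRadius_pos 0),
    h.measure_closedBall_lt_top x 0⟩⟩

end Regularity

section Energies

variable {X E : Type*} [PseudoMetricSpace X] [MeasurableSpace X] [NormedAddCommGroup E]
  {μ ν : Measure X} {f : X → E} {p : ℝ}

/-- The oscillation energy of `f` at the point `x` and the scale `2^{-k}`. -/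
def localEnergy (ν : Measure X) (p : ℝ) (f : X → E) (k : ℕ) (x : X) : ℝ≥0∞ :=
  ∫⁻ y in closedBall x (4 * dyadicRadius k), ‖f x - f y‖ₑ ^ p ∂ν

/-- The total oscillation energy of `f` at the scale `2^{-k}`; summed with the weights `2^{ak}`
it recovers the Gagliardo energy with kernel `edist x y ^ (-a)`. -/
def dyadicEnergy (ν : Measure X) (p : ℝ) (f : X → E) (k : ℕ) : ℝ≥0∞ :=
  ∫⁻ x, localEnergy ν p f k x ∂ν

/-- The weighted oscillation energy of `f` along the chain of balls centred at `w` of scales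
`2^{-k}, 2^{-(k+1)}, …`; it controls the average of `f` at scale `2^{-k}` when the averages
around `w` tend to `0`. Here `Q` is the dimension of `ν` and `η` the exponent given away to
Hölder's inequality. -/
def chainEnergy (ν : Measure X) (p Q η : ℝ) (f : X → E) (k : ℕ) (w : X) : ℝ≥0∞ :=
  ∑' j : ℕ, 2 ^ (η * j) * (2 ^ (2 * Q * (k + j : ℕ)) *
    ∫⁻ x in closedBall w (dyadicRadius (k + j)), localEnergy ν p f (k + j) x ∂ν)

lemma localEnergy_succ_le (k : ℕ) (x : X) :
    localEnergy ν p f (k + 1) x ≤ localEnergy ν p f k x :=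
  lintegral_mono_set <| closedBall_subset_closedBall <| by
    linarith [two_mul_dyadicRadius_succ k, dyadicRadius_pos (k + 1)]

variable [BorelSpace X]

lemma tsum_two_rpow_mul_localEnergy_le (hf : StronglyMeasurable f) {a : ℝ} (ha : 0 ≤ a) (x : X) :
    ∑' k : ℕ, 2 ^ (a * k) * localEnergy ν p f k x ≤
      geomSum a * 2 ^ a * ∫⁻ y, ‖f x - f y‖ₑ ^ p / edist x y ^ a ∂ν := by
  have hF : Measurable fun y => ‖f x - f y‖ₑ ^ p :=
    (stronglyMeasurable_const.sub hf).enorm.pow_const p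
  have hG : Measurable fun y => ‖f x - f y‖ₑ ^ p / edist x y ^ a := hF.div (by fun_prop)
  have hterm (k : ℕ) : 2 ^ (a * k) * localEnergy ν p f k x =
      ∫⁻ y, (if edist x y ≤ ENNReal.ofReal (4 * dyadicRadius k) then 2 ^ (a * k) else 0) *
        ‖f x - f y‖ₑ ^ p ∂ν := by
    classical
    rw [localEnergy, ← lintegral_const_mul _ hF, ← lintegral_indicator measurableSet_closedBall]
    refine lintegral_congr fun y => ?_
    rw [indicator_apply, mem_closedBall, dist_comm, ← edist_le_ofReal
      (mul_nonneg zero_le_four (dyadicRadius_pos k).le), ite_mul, zero_mul]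
    congr
  have hmeas (k : ℕ) : AEMeasurable (fun y =>
      (if edist x y ≤ ENNReal.ofReal (4 * dyadicRadius k) then (2 : ℝ≥0∞) ^ (a * k) else 0) *
        ‖f x - f y‖ₑ ^ p) ν :=
    ((Measurable.ite (measurableSet_le (by fun_prop) measurable_const) measurable_const
      measurable_const).mul hF).aemeasurable
  rw [tsum_congr hterm, ← lintegral_tsum hmeas,
    ← lintegral_const_mul _ hG]
  gcongr with y
  rw [ENNReal.tsum_mul_right, div_eq_mul_inv, mul_comm (‖f x - f y‖ₑ ^ p), ← mul_assoc]
  gcongr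
  exact tsum_two_rpow_of_le_dyadicRadius_le ha (edist x y)

variable [SecondCountableTopology X]

lemma measurable_localEnergy [SFinite ν] (hf : StronglyMeasurable f) (k : ℕ) :
    Measurable (localEnergy ν p f k) :=
  measurable_setLIntegral_closedBall ν _ <|
    ((hf.comp_measurable measurable_fst).sub (hf.comp_measurable measurable_snd)).enorm.pow_const p

lemma tsum_two_rpow_mul_dyadicEnergy_le [SFinite ν] (hf : StronglyMeasurable f) {a : ℝ}
    (ha : 0 < a) : ∑' k : ℕ, 2 ^ (a * k) * dyadicEnergy ν p f k ≤
      geomSum a * 2 ^ a * ∫⁻ x, ∫⁻ y, ‖f x - f y‖ₑ ^ p / edist x y ^ a ∂ν ∂ν := by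
  have hconst : geomSum a * 2 ^ a ≠ ∞ := ENNReal.mul_ne_top (geomSum_ne_top ha) (two_rpow_ne_top a)
  calc ∑' k : ℕ, 2 ^ (a * k) * dyadicEnergy ν p f k
      = ∫⁻ x, ∑' k : ℕ, 2 ^ (a * k) * localEnergy ν p f k x ∂ν := by
        rw [lintegral_tsum fun k => ((measurable_localEnergy hf k).const_mul _).aemeasurable]
        exact tsum_congr fun k => (lintegral_const_mul _ (measurable_localEnergy hf k)).symm
    _ ≤ ∫⁻ x, geomSum a * 2 ^ a * ∫⁻ y, ‖f x - f y‖ₑ ^ p / edist x y ^ a ∂ν ∂ν :=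
        lintegral_mono fun x => tsum_two_rpow_mul_localEnergy_le hf ha.le x
    _ = geomSum a * 2 ^ a * ∫⁻ x, ∫⁻ y, ‖f x - f y‖ₑ ^ p / edist x y ^ a ∂ν ∂ν :=
        lintegral_const_mul' _ _ hconst

lemma measurable_setLIntegral_localEnergy [SFinite ν] (hf : StronglyMeasurable f) (r : ℝ) (k : ℕ) :
    Measurable fun w => ∫⁻ x in closedBall w r, localEnergy ν p f k x ∂ν :=
  measurable_setLIntegral_closedBall ν r ((measurable_localEnergy hf k).comp measurable_snd)

lemma measurable_chainEnergy [SFinite ν] (hf : StronglyMeasurable f) (Q η : ℝ) (k : ℕ) :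
    Measurable (chainEnergy ν p Q η f k) :=
  Measurable.tsum fun j =>
    ((measurable_setLIntegral_localEnergy hf _ (k + j)).const_mul _).const_mul _

lemma lintegral_chainEnergy_le [SFinite μ] [SFinite ν] {d : ℝ} {D : ℝ≥0}
    (hμ : IsUpperRegular μ d D) (hf : StronglyMeasurable f) (Q η : ℝ) (k : ℕ) :
    ∫⁻ w, chainEnergy ν p Q η f k w ∂μ ≤
      D * 2 ^ ((Q - d) * k) * ∑' j : ℕ, 2 ^ ((Q - d + η) * j) *
        (2 ^ (Q * (k + j : ℕ)) * dyadicEnergy ν p f (k + j)) := by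
  have hU (j : ℕ) := measurable_setLIntegral_localEnergy (ν := ν) (p := p) hf
    (dyadicRadius (k + j)) (k + j)
  simp_rw [chainEnergy]
  rw [lintegral_tsum fun j => (((hU j).const_mul _).const_mul _).aemeasurable,
    ← ENNReal.tsum_mul_left]
  gcongr with j
  rw [lintegral_const_mul _ ((hU j).const_mul _), lintegral_const_mul _ (hU j)]
  calc (2 : ℝ≥0∞) ^ (η * j) * (2 ^ (2 * Q * (k + j : ℕ)) *
        ∫⁻ w, ∫⁻ x in closedBall w (dyadicRadius (k + j)), localEnergy ν p f (k + j) x ∂ν ∂μ)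
      ≤ 2 ^ (η * j) * (2 ^ (2 * Q * (k + j : ℕ)) *
        (D * 2 ^ (-(d * (k + j : ℕ))) * dyadicEnergy ν p f (k + j))) := by
        gcongr
        exact lintegral_setLIntegral_closedBall_le μ ν (measurable_localEnergy hf (k + j))
          fun y => hμ y (k + j)
    _ = D * (2 ^ (η * j) * 2 ^ (2 * Q * (k + j : ℕ)) * 2 ^ (-(d * (k + j : ℕ)))) *
        dyadicEnergy ν p f (k + j) := by ring
    _ = D * (2 ^ ((Q - d) * k) * 2 ^ ((Q - d + η) * j) * 2 ^ (Q * (k + j : ℕ))) *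
        dyadicEnergy ν p f (k + j) := by
        simp only [← two_rpow_add]
        push_cast
        ring_nf
    _ = D * 2 ^ ((Q - d) * k) * (2 ^ ((Q - d + η) * j) *
        (2 ^ (Q * (k + j : ℕ)) * dyadicEnergy ν p f (k + j))) := by ring

lemma lintegral_setLIntegral_closedBall_chainEnergy_le [SFinite μ] [SFinite ν]
    {d Q : ℝ} {B D : ℝ≥0} (hν : IsUpperRegular ν Q B) (hμ : IsUpperRegular μ d D)
    (hf : StronglyMeasurable f) (η : ℝ) (i k : ℕ) :
    ∫⁻ x, ∫⁻ w in closedBall x (dyadicRadius i), chainEnergy ν p Q η f k w ∂μ ∂ν ≤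
      B * 2 ^ (-(Q * i)) * (D * 2 ^ ((Q - d) * k) * ∑' j : ℕ, 2 ^ ((Q - d + η) * j) *
        (2 ^ (Q * (k + j : ℕ)) * dyadicEnergy ν p f (k + j))) := by
  refine (lintegral_setLIntegral_closedBall_le ν μ (measurable_chainEnergy hf Q η k)
    fun w => hν w i).trans ?_
  gcongr
  exact lintegral_chainEnergy_le hμ hf Q η k

end Energies

section ChainOfAverages

variable {X E : Type*} [PseudoMetricSpace X] [MeasurableSpace X] [NormedAddCommGroup E]
  {ν : Measure X} {f : X → E} {p Q η : ℝ} {A B : ℝ≥0}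

lemma enorm_rpow_le_of_tendsto_zero (hp : 1 ≤ p) (η : ℝ) {m : ℕ → E}
    (hm : Tendsto m atTop (𝓝 0)) (a : E) (k : ℕ) :
    ‖a‖ₑ ^ p ≤ 2 ^ (p - 1) * (‖a - m k‖ₑ ^ p +
      geomSum (η / p) ^ p * ∑' j : ℕ, 2 ^ (η * j) * ‖m (k + j) - m (k + j + 1)‖ₑ ^ p) := by
  have hp0 : 0 < p := by linarith
  have hk : ‖m k‖ₑ ≤ ∑' j : ℕ, ‖m (k + j) - m (k + j + 1)‖ₑ := by
    have h := edist_le_tsum_of_edist_le_of_tendsto₀ (f := fun j => m (k + j))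
      (fun j => ‖m (k + j) - m (k + j + 1)‖ₑ) (fun j => (edist_eq_enorm_sub _ _).le)
      (a := 0) (by simpa only [add_comm k] using (tendsto_add_atTop_iff_nat k).2 hm)
    simpa only [add_zero, edist_zero_right] using h
  calc ‖a‖ₑ ^ p ≤ (‖a - m k‖ₑ + ‖m k‖ₑ) ^ p := by
        gcongr
        simpa only [sub_add_cancel] using enorm_add_le (a - m k) (m k)
    _ ≤ 2 ^ (p - 1) * (‖a - m k‖ₑ ^ p + ‖m k‖ₑ ^ p) :=
        ENNReal.rpow_add_le_mul_rpow_add_rpow _ _ hp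
    _ ≤ _ := by
        gcongr
        exact (ENNReal.rpow_le_rpow hk hp0.le).trans (tsum_rpow_le_geomSum_mul hp0 η _)

variable [NormedSpace ℝ E] [CompleteSpace E]

lemma enorm_sub_setAverage_closedBall_rpow_le (hν : IsLowerRegularOn ν univ Q A)
    (hν' : IsUpperRegular ν Q B) {w x : X} {k : ℕ}
    (hf : IntegrableOn f (closedBall w (dyadicRadius k)) ν) (hp : 1 ≤ p)
    (hx : dist x w ≤ 2 * dyadicRadius k) :
    ‖f x - ⨍ y in closedBall w (dyadicRadius k), f y ∂ν‖ₑ ^ p ≤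
      A * 2 ^ (Q * k) * localEnergy ν p f k x := by
  have : IsFiniteMeasure (ν.restrict (closedBall w (dyadicRadius k))) :=
    hν'.isFiniteMeasure_restrict_closedBall w k
  have : NeZero (ν.restrict (closedBall w (dyadicRadius k))) :=
    hν.neZero_restrict_closedBall (mem_univ w) k
  calc ‖f x - ⨍ y in closedBall w (dyadicRadius k), f y ∂ν‖ₑ ^ p
      ≤ ⨍⁻ y in closedBall w (dyadicRadius k), ‖f x - f y‖ₑ ^ p ∂ν :=
        enorm_sub_average_rpow_le hf hp (f x)
    _ ≤ A * 2 ^ (Q * k) * localEnergy ν p f k x := by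
        rw [setLAverage_eq, div_eq_mul_inv, mul_comm]
        gcongr ?_ * ?_
        · exact hν.inv_measure_closedBall_le (mem_univ w) k
        · refine lintegral_mono_set (closedBall_subset_closedBall' ?_)
          rw [dist_comm]
          linarith [dyadicRadius_pos k]

variable [BorelSpace X]

lemma enorm_setAverage_sub_setAverage_succ_rpow_le (hν : IsLowerRegularOn ν univ Q A)
    (hν' : IsUpperRegular ν Q B) {w : X} {k : ℕ}
    (hf : ∀ k, IntegrableOn f (closedBall w (dyadicRadius k)) ν) (hp : 1 ≤ p) :
    ‖⨍ y in closedBall w (dyadicRadius k), f y ∂ν -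
        ⨍ y in closedBall w (dyadicRadius (k + 1)), f y ∂ν‖ₑ ^ p ≤
      A ^ 2 * 2 ^ Q * (2 ^ (2 * Q * k) *
        ∫⁻ x in closedBall w (dyadicRadius k), localEnergy ν p f k x ∂ν) := by
  set c := ⨍ y in closedBall w (dyadicRadius (k + 1)), f y ∂ν
  have : IsFiniteMeasure (ν.restrict (closedBall w (dyadicRadius k))) :=
    hν'.isFiniteMeasure_restrict_closedBall w k
  have : NeZero (ν.restrict (closedBall w (dyadicRadius k))) :=
    hν.neZero_restrict_closedBall (mem_univ w) k
  have hconst : (A : ℝ≥0∞) * 2 ^ (Q * (k + 1 : ℕ)) ≠ ∞ :=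
    ENNReal.mul_ne_top ENNReal.coe_ne_top (two_rpow_ne_top _)
  have hpt : ∀ x ∈ closedBall w (dyadicRadius k),
      ‖c - f x‖ₑ ^ p ≤ A * 2 ^ (Q * (k + 1 : ℕ)) * localEnergy ν p f k x := by
    intro x hx
    rw [enorm_sub_rev]
    refine (enorm_sub_setAverage_closedBall_rpow_le hν hν' (hf (k + 1)) hp ?_).trans
      (mul_le_mul_right (localEnergy_succ_le k x) _)
    rwa [two_mul_dyadicRadius_succ]
  calc ‖⨍ y in closedBall w (dyadicRadius k), f y ∂ν - c‖ₑ ^ p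
      ≤ ⨍⁻ x in closedBall w (dyadicRadius k), ‖c - f x‖ₑ ^ p ∂ν := by
        rw [enorm_sub_rev]
        exact enorm_sub_average_rpow_le (hf k) hp c
    _ ≤ A * 2 ^ (Q * k) * ∫⁻ x in closedBall w (dyadicRadius k),
          A * 2 ^ (Q * (k + 1 : ℕ)) * localEnergy ν p f k x ∂ν := by
        rw [setLAverage_eq, div_eq_mul_inv, mul_comm]
        gcongr ?_ * ?_
        · exact hν.inv_measure_closedBall_le (mem_univ w) k
        · exact setLIntegral_mono' measurableSet_closedBall hpt
    _ = A ^ 2 * 2 ^ Q * (2 ^ (2 * Q * k) *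
          ∫⁻ x in closedBall w (dyadicRadius k), localEnergy ν p f k x ∂ν) := by
        rw [lintegral_const_mul' _ _ hconst, Nat.cast_succ, mul_add_one, two_rpow_add, mul_assoc 2,
          two_mul, two_rpow_add]
        ring

lemma enorm_rpow_le_localEnergy_add_chainEnergy (hν : IsLowerRegularOn ν univ Q A)
    (hν' : IsUpperRegular ν Q B) (hp : 1 ≤ p) (η : ℝ) {w x : X} {k : ℕ}
    (hf : ∀ k, IntegrableOn f (closedBall w (dyadicRadius k)) ν)
    (hx : dist x w ≤ 2 * dyadicRadius k)
    (hw : Tendsto (fun k => ⨍ y in closedBall w (dyadicRadius k), f y ∂ν) atTop (𝓝 0)) :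
    ‖f x‖ₑ ^ p ≤ 2 ^ (p - 1) * (A * 2 ^ (Q * k) * localEnergy ν p f k x +
      geomSum (η / p) ^ p * (A ^ 2 * 2 ^ Q * chainEnergy ν p Q η f k w)) := by
  refine (enorm_rpow_le_of_tendsto_zero hp η hw (f x) k).trans ?_
  have hdiff := ENNReal.tsum_le_tsum fun j : ℕ => mul_le_mul_right
    (enorm_setAverage_sub_setAverage_succ_rpow_le (k := k + j) hν hν' hf hp) (2 ^ (η * j))
  simp_rw [mul_left_comm _ ((A : ℝ≥0∞) ^ 2 * 2 ^ Q), ENNReal.tsum_mul_left] at hdiff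
  gcongr
  · exact enorm_sub_setAverage_closedBall_rpow_le hν hν' (hf k) hp hx
  · exact hdiff

end ChainOfAverages

section MetricHardy

variable {X E : Type*} [PseudoMetricSpace X] [MeasurableSpace X] [NormedAddCommGroup E]
  {μ ν : Measure X} {S : Set X} {f : X → E} {p Q d a η : ℝ} {A B C D : ℝ≥0}

lemma IsLowerRegularOn.inv_measure_closedBall_le_of_infEDist_le (hμ : IsLowerRegularOn μ S d C)
    {x : X} {i : ℕ} (hx : infEDist x S ≤ ENNReal.ofReal (dyadicRadius (i + 1))) :
    (μ (closedBall x (dyadicRadius i)))⁻¹ ≤ C * 2 ^ (d * (i + 2 : ℕ)) := by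
  have hradius := two_mul_dyadicRadius_succ i
  have hradius' := two_mul_dyadicRadius_succ (i + 1)
  have hpos := dyadicRadius_pos (i + 2)
  have hlt : infEDist x S < ENNReal.ofReal (3 * dyadicRadius (i + 2)) :=
    hx.trans_lt ((ENNReal.ofReal_lt_ofReal_iff (by positivity)).2 (by linarith))
  obtain ⟨w, hwS, hxw⟩ := infEDist_lt_iff.1 hlt
  rw [edist_lt_ofReal, dist_comm] at hxw
  have hsub : closedBall w (dyadicRadius (i + 2)) ⊆ closedBall x (dyadicRadius i) :=
    closedBall_subset_closedBall' (by linarith)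
  exact (ENNReal.inv_le_inv.2 (measure_mono hsub)).trans (hμ.inv_measure_closedBall_le hwS (i + 2))

variable [BorelSpace X]

lemma lintegral_div_infEDist_rpow_le (S : Set X) (ha : 0 ≤ a) {g : X → ℝ≥0∞} (hg : Measurable g) :
    ∫⁻ x, g x / infEDist x S ^ a ∂ν ≤ 2 ^ (a * 3) * (∫⁻ x, g x ∂ν + ∑' i : ℕ, 2 ^ (a * i) *
      ∫⁻ x in {x | infEDist x S ≤ ENNReal.ofReal (dyadicRadius (i + 1))}, g x ∂ν) := by
  have hmeas (i : ℕ) : MeasurableSet {x | infEDist x S ≤ ENNReal.ofReal (dyadicRadius (i + 1))} :=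
    measurableSet_le measurable_infEDist measurable_const
  have hterm (i : ℕ) : Measurable
      ({x | infEDist x S ≤ ENNReal.ofReal (dyadicRadius (i + 1))}.indicator (2 ^ (a * i) * g ·)) :=
    (hg.const_mul _).indicator (hmeas i)
  calc ∫⁻ x, g x / infEDist x S ^ a ∂ν
      ≤ ∫⁻ x, 2 ^ (a * 3) * (g x + ∑' i : ℕ,
          {x | infEDist x S ≤ ENNReal.ofReal (dyadicRadius (i + 1))}.indicator
            (2 ^ (a * i) * g ·) x) ∂ν := by
        gcongr with x
        refine (mul_le_mul_right
          (inv_rpow_le_tsum_two_rpow_of_le_dyadicRadius ha (infEDist x S)) (g x)).trans_eq ?_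
        rw [mul_left_comm, mul_add, mul_one, ← ENNReal.tsum_mul_left]
        simp only [indicator_apply, mem_ofPred_eq, mul_comm (g x), ite_mul, zero_mul]
    _ = _ := by
        rw [lintegral_const_mul' _ _ (two_rpow_ne_top _), lintegral_add_left hg,
          lintegral_tsum fun i => (hterm i).aemeasurable]
        simp_rw [lintegral_indicator (hmeas _), lintegral_const_mul _ hg]

variable [SecondCountableTopology X] [NormedSpace ℝ E] [CompleteSpace E]

lemma enorm_rpow_le_of_infEDist_le [SFinite ν] (hν : IsLowerRegularOn ν univ Q A)
    (hν' : IsUpperRegular ν Q B) (hμ : IsLowerRegularOn μ S d C) (hμ' : IsUpperRegular μ d D)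
    (hp : 1 ≤ p) (η : ℝ) (hf : StronglyMeasurable f)
    (hfi : ∀ w k, IntegrableOn f (closedBall w (dyadicRadius k)) ν)
    (htrace : ∀ᵐ w ∂μ,
      Tendsto (fun k => ⨍ y in closedBall w (dyadicRadius k), f y ∂ν) atTop (𝓝 0))
    {x : X} {i : ℕ} (hx : infEDist x S ≤ ENNReal.ofReal (dyadicRadius (i + 1))) :
    ‖f x‖ₑ ^ p ≤ 2 ^ (p - 1) * A * 2 ^ (Q * (i + 1 : ℕ)) * localEnergy ν p f (i + 1) x +
      2 ^ (p - 1) * geomSum (η / p) ^ p * A ^ 2 * C * 2 ^ (Q + d * (i + 2 : ℕ)) *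
        ∫⁻ w in closedBall x (dyadicRadius i), chainEnergy ν p Q η f (i + 1) w ∂μ := by
  have hinv := hμ.inv_measure_closedBall_le_of_infEDist_le hx
  have := hμ'.isFiniteMeasure_restrict_closedBall x i
  have : NeZero (μ.restrict (closedBall x (dyadicRadius i))) :=
    ⟨Measure.restrict_eq_zero.not.2 <| ENNReal.inv_ne_top.1 <| ne_top_of_le_ne_top
      (ENNReal.mul_ne_top ENNReal.coe_ne_top (two_rpow_ne_top _)) hinv⟩
  set T := 2 ^ (p - 1) * A * 2 ^ (Q * (i + 1 : ℕ)) * localEnergy ν p f (i + 1) x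
  set c := 2 ^ (p - 1) * geomSum (η / p) ^ p * A ^ 2 * 2 ^ Q with hc
  have hae : ∀ᵐ w ∂μ.restrict (closedBall x (dyadicRadius i)),
      ‖f x‖ₑ ^ p ≤ T + c * chainEnergy ν p Q η f (i + 1) w := by
    filter_upwards [ae_restrict_of_ae htrace, ae_restrict_mem measurableSet_closedBall]
      with w hw hwx
    refine (enorm_rpow_le_localEnergy_add_chainEnergy hν hν' hp η (hfi w) ?_ hw).trans_eq (by ring)
    rwa [two_mul_dyadicRadius_succ, dist_comm]
  calc ‖f x‖ₑ ^ p ≤ T + ⨍⁻ w in closedBall x (dyadicRadius i),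
        c * chainEnergy ν p Q η f (i + 1) w ∂μ := le_add_laverage_of_ae_le_add hae
    _ = T + c * ((μ (closedBall x (dyadicRadius i)))⁻¹ *
        ∫⁻ w in closedBall x (dyadicRadius i), chainEnergy ν p Q η f (i + 1) w ∂μ) := by
      rw [setLAverage_eq, lintegral_const_mul _ (measurable_chainEnergy hf Q η _), div_eq_mul_inv]
      ring
    _ ≤ T + c * (C * 2 ^ (d * (i + 2 : ℕ)) *
        ∫⁻ w in closedBall x (dyadicRadius i), chainEnergy ν p Q η f (i + 1) w ∂μ) := by gcongr
    _ = _ := by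
      rw [hc, two_rpow_add]
      ring

/-- The constant in the estimate of `f` on the slabs `{x | infEDist x S ≤ 2^{-(i+2)}}` by its
oscillation energies; `A, B` and `C, D` are the lower and upper regularity constants of the
`Q`-dimensional and of the `d`-dimensional measure. -/
def slabConst (p Q d η : ℝ) (A B C D : ℝ≥0) : ℝ≥0∞ :=
  2 ^ (p - 1) * (A + geomSum (η / p) ^ p * A ^ 2 * B * C * D * 2 ^ (2 * Q + d))

lemma slabConst_ne_top (hp : 0 < p) (hη : 0 < η) (Q d : ℝ) (A B C D : ℝ≥0) :
    slabConst p Q d η A B C D ≠ ∞ := by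
  have hgeom : geomSum (η / p) ^ p ≠ ∞ :=
    ENNReal.rpow_ne_top_of_nonneg hp.le (geomSum_ne_top (div_pos hη hp))
  have hpow := two_rpow_ne_top
  unfold slabConst
  finiteness [hpow (p - 1), hpow (2 * Q + d)]

lemma setLIntegral_infEDist_le_enorm_rpow_le [SFinite μ] [SFinite ν]
    (hν : IsLowerRegularOn ν univ Q A) (hν' : IsUpperRegular ν Q B)
    (hμ : IsLowerRegularOn μ S d C) (hμ' : IsUpperRegular μ d D) (hp : 1 ≤ p) (η : ℝ)
    (hf : StronglyMeasurable f) (hfi : ∀ w k, IntegrableOn f (closedBall w (dyadicRadius k)) ν)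
    (htrace : ∀ᵐ w ∂μ,
      Tendsto (fun k => ⨍ y in closedBall w (dyadicRadius k), f y ∂ν) atTop (𝓝 0)) (i : ℕ) :
    ∫⁻ x in {x | infEDist x S ≤ ENNReal.ofReal (dyadicRadius (i + 1))}, ‖f x‖ₑ ^ p ∂ν ≤
      slabConst p Q d η A B C D * ∑' j : ℕ, 2 ^ ((Q - d + η) * j) *
        (2 ^ (Q * (i + 1 + j : ℕ)) * dyadicEnergy ν p f (i + 1 + j)) := by
  set c := 2 ^ (p - 1) * geomSum (η / p) ^ p * A ^ 2 * C * 2 ^ (Q + d * (i + 2 : ℕ)) with hc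
  set M := ∑' j : ℕ, 2 ^ ((Q - d + η) * j) *
    (2 ^ (Q * (i + 1 + j : ℕ)) * dyadicEnergy ν p f (i + 1 + j))
  have hfirst : 2 ^ (Q * (i + 1 : ℕ)) * dyadicEnergy ν p f (i + 1) ≤ M := by
    refine le_of_eq_of_le ?_ (ENNReal.le_tsum 0)
    rw [Nat.cast_zero, mul_zero, ENNReal.rpow_zero, one_mul, add_zero]
  have hexp : (2 : ℝ≥0∞) ^ (2 * Q + d) =
      2 ^ (Q + d * (i + 2 : ℕ)) * 2 ^ (-(Q * i)) * 2 ^ ((Q - d) * (i + 1 : ℕ)) := by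
    simp only [← two_rpow_add]
    push_cast
    ring_nf
  calc ∫⁻ x in {x | infEDist x S ≤ ENNReal.ofReal (dyadicRadius (i + 1))}, ‖f x‖ₑ ^ p ∂ν
      ≤ ∫⁻ x, (2 ^ (p - 1) * A * 2 ^ (Q * (i + 1 : ℕ)) * localEnergy ν p f (i + 1) x + c *
          ∫⁻ w in closedBall x (dyadicRadius i), chainEnergy ν p Q η f (i + 1) w ∂μ) ∂ν :=
        (setLIntegral_mono' (measurableSet_le measurable_infEDist measurable_const) fun x hx =>
          enorm_rpow_le_of_infEDist_le hν hν' hμ hμ' hp η hf hfi htrace hx).trans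
          (setLIntegral_le_lintegral _ _)
    _ = 2 ^ (p - 1) * A * (2 ^ (Q * (i + 1 : ℕ)) * dyadicEnergy ν p f (i + 1)) + c *
          ∫⁻ x, ∫⁻ w in closedBall x (dyadicRadius i), chainEnergy ν p Q η f (i + 1) w ∂μ ∂ν := by
        rw [lintegral_add_left ((measurable_localEnergy hf _).const_mul _),
          lintegral_const_mul _ (measurable_localEnergy hf _), lintegral_const_mul _
            (measurable_setLIntegral_closedBall μ _ (g := fun _ => chainEnergy ν p Q η f (i + 1))
              ((measurable_chainEnergy hf Q η _).comp measurable_snd)), dyadicEnergy]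
        ring
    _ ≤ 2 ^ (p - 1) * A * M +
          c * (B * 2 ^ (-(Q * i)) * (D * 2 ^ ((Q - d) * (i + 1 : ℕ)) * M)) := by
        gcongr
        exact lintegral_setLIntegral_closedBall_chainEnergy_le hν' hμ' hf η i (i + 1)
    _ = slabConst p Q d η A B C D * M := by
        rw [slabConst, hexp, hc]
        ring

lemma tsum_two_rpow_mul_setLIntegral_infEDist_le [SFinite μ] [SFinite ν]
    (hν : IsLowerRegularOn ν univ Q A) (hν' : IsUpperRegular ν Q B)
    (hμ : IsLowerRegularOn μ S d C) (hμ' : IsUpperRegular μ d D) (hp : 1 ≤ p)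
    (haQ : 0 < a + Q) (hη : Q - d + η = a - η)
    (hf : StronglyMeasurable f) (hfi : ∀ w k, IntegrableOn f (closedBall w (dyadicRadius k)) ν)
    (htrace : ∀ᵐ w ∂μ,
      Tendsto (fun k => ⨍ y in closedBall w (dyadicRadius k), f y ∂ν) atTop (𝓝 0)) :
    ∑' i : ℕ, 2 ^ (a * i) *
        ∫⁻ x in {x | infEDist x S ≤ ENNReal.ofReal (dyadicRadius (i + 1))}, ‖f x‖ₑ ^ p ∂ν ≤
      slabConst p Q d η A B C D * (2 ^ (-a) * geomSum η * (geomSum (a + Q) * 2 ^ (a + Q) *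
        ∫⁻ x, ∫⁻ y, ‖f x - f y‖ₑ ^ p / edist x y ^ (a + Q) ∂ν ∂ν)) := by
  set c := slabConst p Q d η A B C D
  calc ∑' i : ℕ, 2 ^ (a * i) *
        ∫⁻ x in {x | infEDist x S ≤ ENNReal.ofReal (dyadicRadius (i + 1))}, ‖f x‖ₑ ^ p ∂ν
      ≤ ∑' i : ℕ, 2 ^ (a * i) * (c * ∑' j : ℕ, 2 ^ ((a - η) * j) *
        (2 ^ (Q * (i + 1 + j : ℕ)) * dyadicEnergy ν p f (i + 1 + j))) := by
        rw [← hη]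
        gcongr with i
        exact setLIntegral_infEDist_le_enorm_rpow_le hν hν' hμ hμ' hp η hf hfi htrace i
    _ = c * ∑' i : ℕ, 2 ^ (a * i) * ∑' j : ℕ, 2 ^ ((a - η) * j) *
        (2 ^ (Q * (i + 1 + j : ℕ)) * dyadicEnergy ν p f (i + 1 + j)) := by
        simp_rw [mul_left_comm _ c, ENNReal.tsum_mul_left]
    _ ≤ c * (2 ^ (-a) * geomSum η *
        ∑' k : ℕ, 2 ^ (a * k) * (2 ^ (Q * k) * dyadicEnergy ν p f k)) := by
        gcongr
        exact tsum_two_rpow_mul_tsum_le a η fun k => 2 ^ (Q * k) * dyadicEnergy ν p f k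
    _ ≤ _ := by
        gcongr
        simp_rw [← mul_assoc, ← two_rpow_add, ← add_mul]
        exact tsum_two_rpow_mul_dyadicEnergy_le hf haQ

theorem exists_lintegral_div_infEDist_rpow_le (hν : IsLowerRegularOn ν univ Q A)
    (hν' : IsUpperRegular ν Q B) (hμ : IsLowerRegularOn μ S d C) (hμ' : IsUpperRegular μ d D)
    (hp : 1 ≤ p) (hQ : 0 ≤ Q) (ha : 0 < a) (hda : Q - d < a) :
    ∃ K : ℝ≥0, ∀ f : X → E, StronglyMeasurable f → MemLp f (ENNReal.ofReal p) ν →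
      (∀ᵐ w ∂μ, Tendsto (fun k => ⨍ y in closedBall w (dyadicRadius k), f y ∂ν) atTop (𝓝 0)) →
      ∫⁻ x, ‖f x‖ₑ ^ p / infEDist x S ^ a ∂ν ≤
        K * (∫⁻ x, ‖f x‖ₑ ^ p ∂ν + ∫⁻ x, ∫⁻ y, ‖f x - f y‖ₑ ^ p / edist x y ^ (a + Q) ∂ν ∂ν) := by
  have := hμ'.isLocallyFiniteMeasure
  have := hν'.isLocallyFiniteMeasure
  have haQ : 0 < a + Q := by linarith
  -- Half of the gap `a - (Q - d)` is spent on Hölder's inequality along the chains, the other half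
  -- on the convergence of the sum over the slabs.
  obtain ⟨η, hη⟩ : ∃ η, η = (a + d - Q) / 2 := ⟨_, rfl⟩
  have hη0 : 0 < η := by linarith
  have hK : slabConst p Q d η A B C D *
      (2 ^ (-a) * geomSum η * (geomSum (a + Q) * 2 ^ (a + Q))) ≠ ∞ := by
    finiteness [two_rpow_ne_top (-a), two_rpow_ne_top (a + Q), geomSum_ne_top hη0,
      geomSum_ne_top haQ, slabConst_ne_top (p := p) (by linarith) hη0 Q d A B C D]
  set K := slabConst p Q d η A B C D * (2 ^ (-a) * geomSum η * (geomSum (a + Q) * 2 ^ (a + Q)))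
  refine ⟨(2 ^ (a * 3) * (1 + K)).toNNReal, fun f hf hLp htrace => ?_⟩
  rw [ENNReal.coe_toNNReal (by finiteness [two_rpow_ne_top (a * 3)])]
  have hfi (w : X) (k : ℕ) : IntegrableOn f (closedBall w (dyadicRadius k)) ν := by
    have := hν'.isFiniteMeasure_restrict_closedBall w k
    exact (hLp.restrict _).integrable (by simpa using hp)
  set N := ∫⁻ x, ‖f x‖ₑ ^ p ∂ν
  set G := ∫⁻ x, ∫⁻ y, ‖f x - f y‖ₑ ^ p / edist x y ^ (a + Q) ∂ν ∂ν
  have hNG : N + K * G ≤ (1 + K) * (N + G) := by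
    calc N + K * G ≤ (N + K * G) + (G + K * N) := le_self_add
      _ = (1 + K) * (N + G) := by ring
  calc ∫⁻ x, ‖f x‖ₑ ^ p / infEDist x S ^ a ∂ν
      ≤ 2 ^ (a * 3) * (N + K * G) := by
        refine (lintegral_div_infEDist_rpow_le S ha.le (hf.enorm.pow_const p)).trans ?_
        gcongr
        refine (tsum_two_rpow_mul_setLIntegral_infEDist_le hν hν' hμ hμ' hp haQ
          (η := η) (by linarith) hf hfi htrace).trans_eq ?_
        ring
    _ ≤ 2 ^ (a * 3) * (1 + K) * (N + G) :=
        (mul_le_mul_right hNG _).trans_eq (mul_assoc _ _ _).symm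

end MetricHardy

section Euclidean

variable {n : ℕ} {S : Set (Rn n)} {d C₀ s p a : ℝ} {f : Rn n → ℝ}

lemma volume_closedBall_dyadicRadius (x : Rn n) (k : ℕ) :
    volume (closedBall x (dyadicRadius k)) = 2 ^ (-(n * k : ℝ)) := by
  rw [Real.volume_pi_closedBall _ (dyadicRadius_pos k).le, Fintype.card_fin,
    ← Real.rpow_natCast, two_mul_dyadicRadius_rpow, ofReal_two_rpow]

lemma isLowerRegularOn_volume : IsLowerRegularOn (volume : Measure (Rn n)) univ n 1 :=
  fun x _ k => by rw [volume_closedBall_dyadicRadius, ENNReal.coe_one, one_mul]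

lemma isUpperRegular_volume : IsUpperRegular (volume : Measure (Rn n)) n 1 :=
  fun x k => by rw [volume_closedBall_dyadicRadius, ENNReal.coe_one, one_mul]

lemma IsDSet.isLowerRegularOn (hS : IsDSet S d C₀) :
    IsLowerRegularOn (μH[d].restrict S) S d (C₀.toNNReal * 2 ^ d) := by
  intro w hw k
  have hC₀ : 0 < C₀ := one_pos.trans hS.2.1
  have hle : dyadicRadius k ≤ 1 := by
    linarith [dyadicRadius_pos k, two_mul_dyadicRadius_le_one k]
  calc (2 : ℝ≥0∞) ^ (-(d * k)) =
        ENNReal.ofReal C₀ * 2 ^ d * ENNReal.ofReal (C₀⁻¹ * dyadicRadius k ^ d) := by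
        rw [dyadicRadius_rpow, ← ofReal_two_rpow, ← ofReal_two_rpow, ← ENNReal.ofReal_mul hC₀.le,
          ← ENNReal.ofReal_mul (by positivity), mul_mul_mul_comm, mul_inv_cancel₀ hC₀.ne', one_mul,
          ← Real.rpow_add two_pos]
        ring_nf
    _ ≤ ENNReal.ofReal C₀ * 2 ^ d * μH[d] (closedBall w (dyadicRadius k) ∩ S) := by
        gcongr
        exact (hS.2.2 w hw _ (dyadicRadius_pos k) hle).1
    _ = (C₀.toNNReal * 2 ^ d : ℝ≥0) * μH[d].restrict S (closedBall w (dyadicRadius k)) := by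
        rw [Measure.restrict_apply measurableSet_closedBall, ENNReal.coe_mul,
          ENNReal.coe_rpow_of_ne_zero two_ne_zero, ENNReal.ofReal, ENNReal.coe_ofNat]

lemma IsDSet.isUpperRegular (hS : IsDSet S d C₀) :
    IsUpperRegular (μH[d].restrict S) d C₀.toNNReal := by
  intro x k
  rw [Measure.restrict_apply measurableSet_closedBall]
  rcases (closedBall x (dyadicRadius k) ∩ S).eq_empty_or_nonempty with hempty | ⟨w, hwx, hwS⟩
  · simp [hempty]
  have hsub : closedBall x (dyadicRadius k) ⊆ closedBall w (2 * dyadicRadius k) := by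
    refine closedBall_subset_closedBall' ?_
    rw [dist_comm]
    linarith [mem_closedBall.1 hwx]
  have hpos : 0 < 2 * dyadicRadius k := mul_pos two_pos (dyadicRadius_pos k)
  calc μH[d] (closedBall x (dyadicRadius k) ∩ S)
      ≤ μH[d] (closedBall w (2 * dyadicRadius k) ∩ S) := by gcongr
    _ ≤ ENNReal.ofReal (C₀ * (2 * dyadicRadius k) ^ d) :=
        (hS.2.2 w hwS _ hpos (two_mul_dyadicRadius_le_one k)).2
    _ = C₀.toNNReal * 2 ^ (-(d * k)) := by
        rw [two_mul_dyadicRadius_rpow, ENNReal.ofReal_mul (one_pos.trans hS.2.1).le,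
          ofReal_two_rpow, ENNReal.ofReal]

lemma euclDist_le_mul_dist (x y : Rn n) : euclDist x y ≤ n * dist x y := by
  refine Real.sqrt_le_iff.2 ⟨by positivity, ?_⟩
  have hcoord (i : Fin n) : (x i - y i) ^ 2 ≤ dist x y ^ 2 := by
    rw [← sq_abs, ← Real.dist_eq]
    exact pow_le_pow_left₀ dist_nonneg (dist_le_pi_dist x y i) 2
  calc ∑ i, (x i - y i) ^ 2 ≤ ∑ _i : Fin n, dist x y ^ 2 := Finset.sum_le_sum fun i _ => hcoord i
    _ = n * dist x y ^ 2 := by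
        rw [Finset.sum_const, Finset.card_univ, Fintype.card_fin, nsmul_eq_mul]
    _ ≤ (n : ℝ) ^ 2 * dist x y ^ 2 := by
        gcongr
        exact_mod_cast Nat.le_self_pow two_ne_zero n
    _ = (n * dist x y) ^ 2 := (mul_pow _ _ _).symm

lemma euclDist_pos {x y : Rn n} (hxy : x ≠ y) : 0 < euclDist x y := by
  obtain ⟨i, hi⟩ := Function.ne_iff.1 hxy
  have := sub_ne_zero.2 hi
  exact Real.sqrt_pos.2 <| Finset.sum_pos' (fun j _ => sq_nonneg _)
    ⟨i, Finset.mem_univ i, by positivity⟩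

lemma enorm_sub_rpow_div_edist_rpow_le (hp : 0 < p) (ha : 0 ≤ a) (f : Rn n → ℝ) (x y : Rn n) :
    ‖f x - f y‖ₑ ^ p / edist x y ^ a ≤
      n ^ a * ENNReal.ofReal (|f x - f y| ^ p / euclDist x y ^ a) := by
  rcases eq_or_ne x y with rfl | hxy
  · simp [hp]
  have hn : (n : ℝ≥0∞) ≠ 0 := by
    rintro h
    have : n = 0 := by exact_mod_cast h
    subst this
    exact hxy (Subsingleton.elim x y)
  have heucl : ENNReal.ofReal (euclDist x y) ≤ n * edist x y := by
    rw [edist_dist, ← ENNReal.ofReal_natCast, ← ENNReal.ofReal_mul n.cast_nonneg]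
    exact ENNReal.ofReal_le_ofReal (euclDist_le_mul_dist x y)
  rw [ENNReal.ofReal_div_of_pos (Real.rpow_pos_of_pos (euclDist_pos hxy) a),
    ← ENNReal.ofReal_rpow_of_nonneg (abs_nonneg _) hp.le, ← Real.enorm_eq_ofReal_abs,
    ← ENNReal.ofReal_rpow_of_pos (euclDist_pos hxy)]
  calc ‖f x - f y‖ₑ ^ p / edist x y ^ a
      = n ^ a * (‖f x - f y‖ₑ ^ p / (n * edist x y) ^ a) := by
        rw [ENNReal.mul_rpow_of_nonneg _ _ ha, ← mul_div_assoc, ENNReal.mul_div_mul_left]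
        · exact (ENNReal.rpow_pos (pos_iff_ne_zero.2 hn) (ENNReal.natCast_ne_top n)).ne'
        · exact ENNReal.rpow_ne_top_of_nonneg ha (ENNReal.natCast_ne_top n)
    _ ≤ n ^ a * (‖f x - f y‖ₑ ^ p / ENNReal.ofReal (euclDist x y) ^ a) := by gcongr

lemma ofReal_abs_rpow_div_infDist_rpow_le (hp : 0 ≤ p) (ha : 0 < a) (u : ℝ) (x : Rn n)
    (S : Set (Rn n)) :
    ENNReal.ofReal (|u| ^ p / infDist x S ^ a) ≤ ‖u‖ₑ ^ p / infEDist x S ^ a := by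
  rcases (infDist_nonneg (x := x) (s := S)).eq_or_lt' with hzero | hpos
  · simp [hzero, ha.ne']
  have htop : infEDist x S ≠ ∞ := (ENNReal.toReal_pos_iff.1 hpos).2.ne
  rw [ENNReal.ofReal_div_of_pos (Real.rpow_pos_of_pos hpos a),
    ← ENNReal.ofReal_rpow_of_nonneg (abs_nonneg u) hp, ← Real.enorm_eq_ofReal_abs,
    ← ENNReal.ofReal_rpow_of_pos hpos, infDist, ENNReal.ofReal_toReal htop]

lemma lpNormR_rpow (hp : p ≠ 0) : lpNormR p f ^ p = ∫⁻ x, ‖f x‖ₑ ^ p := by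
  simp_rw [lpNormR, one_div, ENNReal.rpow_inv_rpow hp, Real.enorm_eq_ofReal_abs]

lemma memLp_of_sobolevNorm_lt_top (hp : 0 < p) (hf : Measurable f) (h : sobolevNorm s p f < ⊤) :
    MemLp f (ENNReal.ofReal p) := by
  refine ⟨hf.aestronglyMeasurable, ?_⟩
  rw [eLpNorm_eq_lintegral_rpow_enorm_toReal (by simpa using hp) ENNReal.ofReal_ne_top,
    ENNReal.toReal_ofReal hp.le, ← lpNormR_rpow hp.ne', one_div, ENNReal.rpow_rpow_inv hp.ne']
  exact le_self_add.trans_lt h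

lemma lintegral_enorm_sub_rpow_div_edist_rpow_le (hp : 0 < p) (hs : 0 ≤ s) (f : Rn n → ℝ) :
    ∫⁻ x, ∫⁻ y, ‖f x - f y‖ₑ ^ p / edist x y ^ (s * p + n) ≤
      n ^ (s * p + n) * gagliardo s p f ^ p := by
  have ha : 0 ≤ s * p + n := by positivity
  have hconst : (n : ℝ≥0∞) ^ (s * p + n) ≠ ∞ :=
    ENNReal.rpow_ne_top_of_nonneg ha (ENNReal.natCast_ne_top n)
  rw [gagliardo, one_div, ENNReal.rpow_inv_rpow hp.ne', ← lintegral_const_mul' _ _ hconst]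
  simp_rw [← lintegral_const_mul' _ _ hconst]
  gcongr with x y
  exact enorm_sub_rpow_div_edist_rpow_le hp ha f x y

lemma hardyLHS_le (hp : 0 ≤ p) (ha : 0 < s * p) (S : Set (Rn n)) (f : Rn n → ℝ) :
    hardyLHS S s p f ≤ (∫⁻ x, ‖f x‖ₑ ^ p / infEDist x S ^ (s * p)) ^ (1 / p) := by
  unfold hardyLHS
  gcongr with x
  exact ofReal_abs_rpow_div_infDist_rpow_le hp ha (f x) x S

end Euclidean

theorem hardy_fractional_sobolev_general {n : ℕ} (S : Set (Rn n)) (d C₀ : ℝ)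
    (hS : IsDSet S d C₀) (hd : d ≤ n) (p s : ℝ) (hp : 1 ≤ p) (hs : ((n : ℝ) - d) / p < s) :
    ∃ c > 0, ∀ f : Rn n → ℝ, Measurable f → sobolevNorm s p f < ⊤ → TraceZero S d f →
      hardyLHS S s p f ≤ ENNReal.ofReal c * sobolevNorm s p f := by
  have hp0 : 0 < p := by linarith
  have hs0 : 0 < s := (div_nonneg (sub_nonneg.2 hd) hp0.le).trans_lt hs
  obtain ⟨K, hK⟩ := exists_lintegral_div_infEDist_rpow_le (E := ℝ) isLowerRegularOn_volume
    isUpperRegular_volume hS.isLowerRegularOn hS.isUpperRegular hp n.cast_nonneg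
    (mul_pos hs0 hp0) ((div_lt_iff₀ hp0).1 hs)
  set c : ℝ≥0∞ := (K * (1 + n ^ (s * p + n))) ^ (1 / p)
  have hc : c ≠ ∞ := by
    have hn : (n : ℝ≥0∞) ^ (s * p + n) ≠ ∞ :=
      ENNReal.rpow_ne_top_of_nonneg (by positivity) (ENNReal.natCast_ne_top n)
    exact ENNReal.rpow_ne_top_of_nonneg (by positivity) (by finiteness)
  refine ⟨c.toReal + 1, by positivity, fun f hf hfin htrace => ?_⟩
  set N := sobolevNorm s p f
  have hL : ∫⁻ x, ‖f x‖ₑ ^ p ≤ N ^ p := by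
    rw [← lpNormR_rpow hp0.ne']
    gcongr
    exact le_self_add
  have hG : ∫⁻ x, ∫⁻ y, ‖f x - f y‖ₑ ^ p / edist x y ^ (s * p + n) ≤ n ^ (s * p + n) * N ^ p := by
    refine (lintegral_enorm_sub_rpow_div_edist_rpow_le hp0 hs0.le f).trans ?_
    gcongr
    exact le_add_self
  calc hardyLHS S s p f ≤ (∫⁻ x, ‖f x‖ₑ ^ p / infEDist x S ^ (s * p)) ^ (1 / p) :=
        hardyLHS_le hp0.le (mul_pos hs0 hp0) S f
    _ ≤ (K * (1 + n ^ (s * p + n)) * N ^ p) ^ (1 / p) := by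
        gcongr
        refine (hK f hf.stronglyMeasurable (memLp_of_sobolevNorm_lt_top hp0 hf hfin)
          (htrace.mono fun w hw => hw.comp tendsto_dyadicRadius)).trans ?_
        rw [mul_assoc, one_add_mul]
        gcongr
    _ = c * N := by
        rw [ENNReal.mul_rpow_of_nonneg _ _ (by positivity), ← ENNReal.rpow_mul,
          mul_one_div_cancel hp0.ne', ENNReal.rpow_one]
    _ ≤ ENNReal.ofReal (c.toReal + 1) * N := by
        gcongr
        exact (ENNReal.le_ofReal_iff_toReal_le hc (by positivity)).2 (by linarith)

/-- **Hardy inequality for fractional Sobolev spaces** (Theorem 3.2).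
If `S ⊆ ℝⁿ` (`n ≥ 2`) is a `d`-set with `n−1 < d < n`, `1 < p < ∞` and
`(n−d)/p < s < 1`, then there is `c > 0` such that every `f ∈ W^{s,p}(ℝⁿ)` with
`Tr_S f = 0` ℋᵈ-a.e. satisfies
`(∫ |f(x)|^p / dist(x,S)^{sp} dx)^{1/p} ≤ c ‖f‖_{W^{s,p}(ℝⁿ)}`. -/
theorem hardy_fractional_sobolev {n : ℕ} (hn : 2 ≤ n) (S : Set (Rn n)) (d C₀ : ℝ)
    (hS : IsDSet S d C₀) (hd1 : (n : ℝ) - 1 < d) (hd2 : d < n)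
    (p s : ℝ) (hp : 1 < p) (hs1 : ((n : ℝ) - d) / p < s) (hs2 : s < 1) :
    ∃ c > 0, ∀ f : Rn n → ℝ, Measurable f → sobolevNorm s p f < ⊤ →
      TraceZero S d f →
      hardyLHS S s p f ≤ ENNReal.ofReal c * sobolevNorm s p f := by
  exact hardy_fractional_sobolev_general S d C₀ hS hd2.le p s hp.le hs1
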